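/- Let m, n be natural numbers with m > n, and let x > 1 be real. Then d^m/dx^m [P_n(x)·log(x+1)] = (−1)^{n+m+1}·(n+m)!·(m−n−1)!·(x+1)^{−m} Σ_{j=0}^{n} ((n+j)!/((n−j)!·(m+j)!·j!))·((x−1)/2)^j. -/

import Mathlib

open Finset Real

/-- The Legendre polynomial `P_n`, via its explicit expansion
`P_n(x) = ∑_{k=0}^{n} ((n+k)!/((k!)² (n−k)!)) ((x−1)/2)^k`. -/
noncomputable def legendreP (n : ℕ) (x : ℝ) : ℝ :=
  ∑ k ∈ Finset.range (n + 1),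
    (((n + k).factorial : ℝ) / (((k.factorial : ℝ)) ^ 2 * ((n - k).factorial : ℝ))) *
      ((x - 1) / 2) ^ k

/-- The harmonic number `H_i = ∑_{r=1}^{i} 1/r`. -/
noncomputable def harm (i : ℕ) : ℝ := ∑ r ∈ Finset.range i, (1 : ℝ) / (r + 1)

/-- The digamma function at a positive integer `j`: `ψ(j) = H_{j−1} − γ`. -/
noncomputable def psi (j : ℕ) : ℝ := harm (j - 1) - Real.eulerMascheroniConstant

/-!
The symmetry `P_n(-x) = (-1)^n P_n(x)` turns the expansion of `P_n` at `1` into one in powers of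
`s = x + 1`. For `k < m` the `m`-th derivative of `s^k log s` no longer contains a logarithm: it is
`(-1)^(m-k-1) k! (m-k-1)! s^(k-m)`. Multiplied by the signs `(-1)^(n+k)` of the
coefficients of `P_n`, these have a sign independent of `k`, so up to sign the result is `s^(-m)`
times a polynomial in `s / 2` with positive coefficients. Expanding it at `s / 2 = 1`,
that is, in powers of `(x - 1) / 2`, each new coefficient is a convolution of binomial coefficients
evaluated by comparing coefficients in
`(1 - X)^(-(a+1)) (1 - X)^(-(b+1)) = (1 - X)^(-(a+b+2))`.
-/

section

open scoped Nat

theorem sum_antidiagonal_choose_add_mul_choose_add (a b n : ℕ) :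
    ∑ p ∈ antidiagonal n, (a + p.1).choose a * (b + p.2).choose b =
      (a + b + 1 + n).choose (a + b + 1) := by
  have hpow : (PowerSeries.mk 1 : PowerSeries ℤ) ^ (a + 1) * PowerSeries.mk 1 ^ (b + 1) =
      PowerSeries.mk 1 ^ (a + b + 1 + 1) := by
    rw [← pow_add]
    congr 1
    ring
  simp only [PowerSeries.mk_one_pow_eq_mk_choose_add] at hpow
  have hcoeff := congrArg (PowerSeries.coeff n) hpow
  simp only [PowerSeries.coeff_mul, PowerSeries.coeff_mk] at hcoeff
  exact_mod_cast hcoeff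

theorem sum_antidiagonal_factorial_add_mul_factorial_add_div {K : Type*} [Field K] [CharZero K]
    (a b n : ℕ) :
    ∑ p ∈ antidiagonal n, ((a + p.1)! * (b + p.2)! : K) / (p.1 ! * p.2 !) =
      a ! * b ! * (a + b + 1 + n)! / (n ! * (a + b + 1)!) := by
  have hfac (i : ℕ) : (i ! : K) ≠ 0 := Nat.cast_ne_zero.2 i.factorial_ne_zero
  have hvandermonde := congrArg (Nat.cast (R := K))
    (sum_antidiagonal_choose_add_mul_choose_add a b n)
  simp only [Nat.cast_sum, Nat.cast_mul, Nat.cast_add_choose] at hvandermonde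
  calc
    _ = a ! * b ! * ∑ p ∈ antidiagonal n,
          ((a + p.1)! / (a ! * p.1 !) * ((b + p.2)! / (b ! * p.2 !)) : K) := by
      rw [mul_sum]
      refine sum_congr rfl fun p _ => ?_
      field_simp [hfac]
    _ = _ := by
      rw [hvandermonde]
      field_simp [hfac]

theorem sum_range_mul_add_one_pow {R : Type*} [CommSemiring R] (c : ℕ → R) (n : ℕ) (u : R) :
    ∑ k ∈ range n, c k * (u + 1) ^ k =
      ∑ j ∈ range n, (∑ i ∈ range (n - j), c (j + i) * (j + i).choose j) * u ^ j := by
  simp only [sum_mul]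
  rw [← sum_range_diag_flip n fun j i => c (j + i) * (j + i).choose j * u ^ j]
  refine sum_congr rfl fun k _ => ?_
  rw [add_pow, mul_sum]
  refine sum_congr rfl fun j hj => ?_
  rw [Nat.add_sub_cancel' (mem_range_succ_iff.1 hj), one_pow]
  ring

theorem sum_range_factorial_mul_factorial_div_mul_add_one_pow {K : Type*} [Field K] [CharZero K]
    (n b : ℕ) (u : K) :
    ∑ k ∈ range (n + 1), ((n + k)! * (b + (n - k))! / (k ! * (n - k)!) : K) * (u + 1) ^ k =
      (n + (n + b + 1))! * b ! *
        ∑ j ∈ range (n + 1), (n + j)! / ((n - j)! * (n + b + 1 + j)! * j !) * u ^ j := by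
  have hfac (i : ℕ) : (i ! : K) ≠ 0 := Nat.cast_ne_zero.2 i.factorial_ne_zero
  rw [sum_range_mul_add_one_pow, mul_sum]
  refine sum_congr rfl fun j hj => ?_
  obtain ⟨N, rfl⟩ := Nat.exists_eq_add_of_le (mem_range_succ_iff.1 hj)
  rw [← mul_assoc]
  congr 1
  calc
    _ = ∑ i ∈ range (N + 1), (j ! : K)⁻¹ *
          ((j + N + j + i)! * (b + (N - i))! / (i ! * (N - i)!)) := by
      rw [show j + N + 1 - j = N + 1 by lia]
      refine sum_congr rfl fun i _ => ?_
      rw [Nat.cast_add_choose, Nat.add_sub_add_left, ← add_assoc]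
      field_simp [hfac]
    _ = (j ! : K)⁻¹ * ((j + N + j)! * b ! * (j + N + j + b + 1 + N)! /
          (N ! * (j + N + j + b + 1)!)) := by
      rw [← mul_sum, ← sum_antidiagonal_factorial_add_mul_factorial_add_div,
        Nat.sum_antidiagonal_eq_sum_range_succ_mk]
    _ = _ := by
      rw [Nat.add_sub_cancel_left, show j + N + j + b + 1 + N = j + N + (j + N + b + 1) by ring,
        show j + N + j + b + 1 = j + N + b + 1 + j by ring]
      field_simp [hfac]

theorem contDiffAt_pow_mul_log {m : WithTop ℕ∞} (k : ℕ) {x : ℝ} (hx : x ≠ 0) :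
    ContDiffAt ℝ m (fun y => y ^ k * log y) x :=
  (contDiffAt_id.pow k).mul (contDiffAt_log.2 hx)

theorem deriv_pow_succ_mul_log (k : ℕ) {x : ℝ} (hx : x ≠ 0) :
    deriv (fun y => y ^ (k + 1) * log y) x = (k + 1) * (x ^ k * log x) + x ^ k := by
  refine ((hasDerivAt_pow (k + 1) x).mul (hasDerivAt_log hx)).deriv.trans ?_
  push_cast
  field_simp
  ring

theorem iteratedDeriv_succ_real_log (j : ℕ) (x : ℝ) :
    iteratedDeriv (j + 1) log x = (-1) ^ j * j ! / x ^ (j + 1) := by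
  rw [iteratedDeriv_succ', deriv_log', iteratedDeriv_eq_iterate, iter_deriv_inv,
    show (-1 - j : ℤ) = -(j + 1 : ℕ) by push_cast; ring, zpow_neg, zpow_natCast, div_eq_mul_inv]

theorem iteratedDeriv_pow_mul_log (k j : ℕ) {x : ℝ} (hx : x ≠ 0) :
    iteratedDeriv (k + j + 1) (fun y => y ^ k * log y) x =
      (-1) ^ j * k ! * j ! / x ^ (j + 1) := by
  induction k with
  | zero => simpa using iteratedDeriv_succ_real_log j x
  | succ k ih =>
    have hderiv : deriv (fun y => y ^ (k + 1) * log y) =ᶠ[nhds x]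
        fun y => (k + 1) * (y ^ k * log y) + y ^ k := by
      filter_upwards [isOpen_ne.mem_nhds hx] with y hy using deriv_pow_succ_mul_log k hy
    have hpow : iteratedDeriv (k + j + 1) (fun y : ℝ => y ^ k) x = 0 := by
      rw [iteratedDeriv_pow, Nat.descFactorial_of_lt (by lia)]
      simp
    calc
      _ = iteratedDeriv (k + j + 1) (fun y => (k + 1) * (y ^ k * log y) + y ^ k) x := by
        rw [show k + 1 + j + 1 = k + j + 1 + 1 by ring, iteratedDeriv_succ',
          hderiv.iteratedDeriv_eq]
      _ = (k + 1) * iteratedDeriv (k + j + 1) (fun y => y ^ k * log y) x := by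
        rw [iteratedDeriv_fun_add (contDiffAt_const.mul (contDiffAt_pow_mul_log k hx))
          (contDiffAt_fun_id.pow k), iteratedDeriv_const_mul_field, hpow, add_zero]
      _ = _ := by
        rw [ih, Nat.factorial_succ]
        push_cast
        ring

theorem legendreP_eq_aeval_shiftedLegendre (n : ℕ) (x : ℝ) :
    legendreP n x = Polynomial.aeval ((1 - x) / 2) (Polynomial.shiftedLegendre n) := by
  simp only [legendreP, Polynomial.shiftedLegendre, map_sum, map_mul, map_pow, map_neg, map_one,
    map_natCast, Polynomial.aeval_X]
  refine sum_congr rfl fun k hk => ?_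
  rw [Nat.cast_add_choose, Nat.cast_choose ℝ (mem_range_succ_iff.1 hk),
    show (x - 1) / 2 = -1 * ((1 - x) / 2) by ring, mul_pow]
  field_simp [Nat.factorial_ne_zero]

theorem legendreP_neg (n : ℕ) (x : ℝ) : legendreP n (-x) = (-1) ^ n * legendreP n x := by
  rw [legendreP_eq_aeval_shiftedLegendre, legendreP_eq_aeval_shiftedLegendre,
    Polynomial.shiftedLegendre_eval_symm, show 1 - (1 - -x) / 2 = (1 - x) / 2 by ring]

theorem legendreP_eq_sum_add_one_pow (n : ℕ) (x : ℝ) :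
    legendreP n x = ∑ k ∈ range (n + 1),
      (-1) ^ (n + k) * ((n + k)! / (k ! ^ 2 * (n - k)!)) / 2 ^ k * (x + 1) ^ k := by
  rw [← neg_neg x, legendreP_neg, legendreP, mul_sum]
  refine sum_congr rfl fun k _ => ?_
  rw [show (-x - 1) / 2 = -1 * ((x + 1) / 2) by ring, mul_pow, div_pow, neg_neg]
  ring

theorem iteratedDeriv_legendreP_mul_log (n b : ℕ) {x : ℝ} (hx : x ≠ -1) :
    iteratedDeriv (n + b + 1) (fun y => legendreP n y * log (y + 1)) x =
      (-1) ^ b / (x + 1) ^ (n + b + 1) *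
        ∑ k ∈ range (n + 1),
          (n + k)! * (b + (n - k))! / (k ! * (n - k)!) * ((x + 1) / 2) ^ k := by
  have hx' : x + 1 ≠ 0 := fun h => hx (eq_neg_of_add_eq_zero_left h)
  simp only [legendreP_eq_sum_add_one_pow, sum_mul, mul_assoc _ (_ ^ _) (log _)]
  rw [congrFun (iteratedDeriv_comp_add_const (n + b + 1) (fun z => ∑ k ∈ range (n + 1),
      (-1) ^ (n + k) * ((n + k)! / (k ! ^ 2 * (n - k)!)) / 2 ^ k * (z ^ k * log z)) 1) x,
    iteratedDeriv_fun_sum fun k _ => contDiffAt_const.mul (contDiffAt_pow_mul_log k hx'), mul_sum]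
  refine sum_congr rfl fun k hk => ?_
  obtain ⟨i, rfl⟩ := Nat.exists_eq_add_of_le (mem_range_succ_iff.1 hk)
  have hsign : (-1 : ℝ) ^ (k + i + k) * (-1) ^ (b + i) = (-1) ^ b := by
    rw [← pow_add, show k + i + k + (b + i) = b + 2 * (k + i) by ring, pow_add, pow_mul]
    simp
  rw [iteratedDeriv_const_mul_field, show k + i + b + 1 = k + (b + i) + 1 by ring,
    iteratedDeriv_pow_mul_log k (b + i) hx', Nat.add_sub_cancel_left, div_pow,
    ← hsign]
  field_simp [Nat.factorial_ne_zero]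
  ring

end

theorem stmt_10_general (m n : ℕ) (hmn : n < m) (x : ℝ) (hx : -1 < x) :
    iteratedDeriv m (fun y => legendreP n y * Real.log (y + 1)) x =
      (-1 : ℝ) ^ (n + m + 1) * ((n + m).factorial : ℝ) * ((m - n - 1).factorial : ℝ) *
        (x + 1) ^ (-(m : ℤ)) *
        ∑ j ∈ Finset.range (n + 1),
          ((n + j).factorial : ℝ) /
              (((n - j).factorial : ℝ) * ((m + j).factorial : ℝ) * (j.factorial : ℝ)) *
            ((x - 1) / 2) ^ j := by
  obtain ⟨b, rfl⟩ := Nat.exists_eq_add_of_lt hmn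
  have hsign : (-1 : ℝ) ^ (n + (n + b + 1) + 1) = (-1) ^ b := by
    rw [show n + (n + b + 1) + 1 = b + 2 * (n + 1) by ring, pow_add, pow_mul]
    simp
  rw [iteratedDeriv_legendreP_mul_log n b hx.ne', show (x + 1) / 2 = (x - 1) / 2 + 1 by ring,
    sum_range_factorial_mul_factorial_div_mul_add_one_pow, hsign,
    show n + b + 1 - n - 1 = b by lia, zpow_neg, zpow_natCast]
  ring

theorem stmt_10 (m n : ℕ) (hmn : n < m) (x : ℝ) (hx : 1 < x) :
    iteratedDeriv m (fun y => legendreP n y * Real.log (y + 1)) x =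
      (-1 : ℝ) ^ (n + m + 1) * ((n + m).factorial : ℝ) * ((m - n - 1).factorial : ℝ) *
        (x + 1) ^ (-(m : ℤ)) *
        ∑ j ∈ Finset.range (n + 1),
          ((n + j).factorial : ℝ) /
              (((n - j).factorial : ℝ) * ((m + j).factorial : ℝ) * (j.factorial : ℝ)) *
            ((x - 1) / 2) ^ j :=
  stmt_10_general m n hmn x (by linarith)
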